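/- (Proposition 4, Berger–Tung region decomposition.) The rate-distortion region RD_BT equals the convex hull of the union of the two regions RD¹_BT and RD²_BT, i.e., RD_BT = conv(RD¹_BT ∪ RD²_BT) as subsets of ℝ⁴. -/

import Mathlib

open Finset Real

noncomputable section

/-- Shannon entropy of a finitely supported nonnegative vector,
with the convention `0 · log 0 = 0` (natural logarithm). -/
def ent {α : Type} [Fintype α] (p : α → ℝ) : ℝ := ∑ a, Real.negMulLog (p a)

/-- `p` is a probability mass function on the finite alphabet `α`. -/
def IsPmf {α : Type} [Fintype α] (p : α → ℝ) : Prop := (∀ a, 0 ≤ p a) ∧ ∑ a, p a = 1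

/-- `w` is a conditional pmf (channel) from `α` to `β`. -/
def IsChan {α β : Type} [Fintype α] [Fintype β] (w : α → β → ℝ) : Prop := ∀ a, IsPmf (w a)

/-- Kullback–Leibler divergence between two vectors on a finite alphabet
(convention `0 · log (0/q) = 0` is automatic since the coefficient vanishes). -/
def KL {α : Type} [Fintype α] (r q : α → ℝ) : ℝ := ∑ a, r a * Real.log (r a / q a)

/-- The extended-real value of a term `−a · log q`: it is `+∞` if `a > 0` and `q = 0`. -/
def nlogE (a q : ℝ) : EReal := if 0 < a ∧ q = 0 then ⊤ else ((-(a * Real.log q) : ℝ) : EReal)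

variable {Y1 Y2 U1 U2 : Type} [Fintype Y1] [Fintype Y2] [Fintype U1] [Fintype U2]

/-- The joint pmf `p(y₁,y₂,u₁,u₂) = p(y₁,y₂)p(u₁|y₁)p(u₂|y₂)` induced by the source `pY`
and a test-channel pair `(p1, p2)`. -/
def btJoint (pY : Y1 × Y2 → ℝ) (p1 : Y1 → U1 → ℝ) (p2 : Y2 → U2 → ℝ) :
    Y1 × Y2 × U1 × U2 → ℝ :=
  fun z => pY (z.1, z.2.1) * p1 z.1 z.2.2.1 * p2 z.2.1 z.2.2.2

/-- Marginal `p(y₁,u₁,u₂)`. -/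
def bY1U (j : Y1 × Y2 × U1 × U2 → ℝ) : Y1 × U1 × U2 → ℝ :=
  fun z => ∑ y2, j (z.1, y2, z.2.1, z.2.2)

/-- Marginal `p(y₂,u₁,u₂)`. -/
def bY2U (j : Y1 × Y2 × U1 × U2 → ℝ) : Y2 × U1 × U2 → ℝ :=
  fun z => ∑ y1, j (y1, z.1, z.2.1, z.2.2)

/-- Marginal `p(u₁,u₂)`. -/
def bU12 (j : Y1 × Y2 × U1 × U2 → ℝ) : U1 × U2 → ℝ :=
  fun u => ∑ y1, bY1U j (y1, u.1, u.2)

/-- Marginal `p(u₂)`. -/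
def bU2 (j : Y1 × Y2 × U1 × U2 → ℝ) : U2 → ℝ := fun u2 => ∑ u1, bU12 j (u1, u2)

/-- Marginal `p(u₁)`. -/
def bU1 (j : Y1 × Y2 × U1 × U2 → ℝ) : U1 → ℝ := fun u1 => ∑ u2, bU12 j (u1, u2)

/-- Marginal `p(y₁,u₂)`. -/
def bY1U2 (j : Y1 × Y2 × U1 × U2 → ℝ) : Y1 × U2 → ℝ :=
  fun z => ∑ u1, bY1U j (z.1, u1, z.2)

/-- Marginal `p(y₂,u₂)`. -/
def bY2U2 (j : Y1 × Y2 × U1 × U2 → ℝ) : Y2 × U2 → ℝ :=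
  fun z => ∑ u1, bY2U j (z.1, u1, z.2)

/-- Marginal `p(y₂,u₁)`. -/
def bY2U1 (j : Y1 × Y2 × U1 × U2 → ℝ) : Y2 × U1 → ℝ :=
  fun z => ∑ u2, bY2U j (z.1, z.2, u2)

/-- Marginal `p(y₁,u₁)`. -/
def bY1U1 (j : Y1 × Y2 × U1 × U2 → ℝ) : Y1 × U1 → ℝ :=
  fun z => ∑ u2, bY1U j (z.1, z.2, u2)

/-- Marginal `p(y₁)`. -/
def bY1 (j : Y1 × Y2 × U1 × U2 → ℝ) : Y1 → ℝ := fun y1 => ∑ u2, bY1U2 j (y1, u2)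

/-- Marginal `p(y₂)`. -/
def bY2 (j : Y1 × Y2 × U1 × U2 → ℝ) : Y2 → ℝ := fun y2 => ∑ u2, bY2U2 j (y2, u2)

/-- Conditional entropy `H(Y₁|U₁,U₂)`. -/
def bH1 (j : Y1 × Y2 × U1 × U2 → ℝ) : ℝ := ent (bY1U j) - ent (bU12 j)

/-- Conditional entropy `H(Y₂|U₁,U₂)`. -/
def bH2 (j : Y1 × Y2 × U1 × U2 → ℝ) : ℝ := ent (bY2U j) - ent (bU12 j)

/-- Conditional mutual information `I(Y₁;U₁|U₂)`. -/
def bI1c (j : Y1 × Y2 × U1 × U2 → ℝ) : ℝ :=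
  ent (bY1U2 j) + ent (bU12 j) - ent (bU2 j) - ent (bY1U j)

/-- Mutual information `I(Y₂;U₂)`. -/
def bI2m (j : Y1 × Y2 × U1 × U2 → ℝ) : ℝ := ent (bY2 j) + ent (bU2 j) - ent (bY2U2 j)

/-- Conditional mutual information `I(Y₂;U₂|U₁)`. -/
def bI2c (j : Y1 × Y2 × U1 × U2 → ℝ) : ℝ :=
  ent (bY2U1 j) + ent (bU12 j) - ent (bU1 j) - ent (bY2U j)

/-- Mutual information `I(Y₁;U₁)`. -/
def bI1m (j : Y1 × Y2 × U1 × U2 → ℝ) : ℝ := ent (bY1 j) + ent (bU1 j) - ent (bY1U1 j)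

/-- The functional
`F_β(P) = α H(Y₁|U₁,U₂) + (1−α) H(Y₂|U₁,U₂) + s₁ I(Y₁;U₁|U₂) + s₂ I(Y₂;U₂)`. -/
def Fb (s1 s2 a : ℝ) (j : Y1 × Y2 × U1 × U2 → ℝ) : ℝ :=
  a * bH1 j + (1 - a) * bH2 j + s1 * bI1c j + s2 * bI2m j

/-- `D¹_{BT,α}(R₁,R₂)`: the minimal `α H(Y₁|U₁,U₂) + (1−α) H(Y₂|U₁,U₂)` over test-channel
pairs into `V1`, `V2`, subject to `I(Y₁;U₁|U₂) ≤ R₁` and `I(Y₂;U₂) ≤ R₂`. -/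
def Dbt1 (V1 V2 : Type) [Fintype V1] [Fintype V2]
    (pY : Y1 × Y2 → ℝ) (a R1 R2 : ℝ) : ℝ :=
  sInf {d : ℝ | ∃ p1 : Y1 → V1 → ℝ, ∃ p2 : Y2 → V2 → ℝ, IsChan p1 ∧ IsChan p2 ∧
    bI1c (btJoint pY p1 p2) ≤ R1 ∧ bI2m (btJoint pY p1 p2) ≤ R2 ∧
    d = a * bH1 (btJoint pY p1 p2) + (1 - a) * bH2 (btJoint pY p1 p2)}

/-- `D²_{BT,α}(R₁,R₂)`: the minimal `α H(Y₁|U₁,U₂) + (1−α) H(Y₂|U₁,U₂)` subject to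
`I(Y₂;U₂|U₁) ≤ R₂` and `I(Y₁;U₁) ≤ R₁`. -/
def Dbt2 (V1 V2 : Type) [Fintype V1] [Fintype V2]
    (pY : Y1 × Y2 → ℝ) (a R1 R2 : ℝ) : ℝ :=
  sInf {d : ℝ | ∃ p1 : Y1 → V1 → ℝ, ∃ p2 : Y2 → V2 → ℝ, IsChan p1 ∧ IsChan p2 ∧
    bI2c (btJoint pY p1 p2) ≤ R2 ∧ bI1m (btJoint pY p1 p2) ≤ R1 ∧
    d = a * bH1 (btJoint pY p1 p2) + (1 - a) * bH2 (btJoint pY p1 p2)}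

/-- Source marginal `p(y₁)`. -/
def bpY1 (pY : Y1 × Y2 → ℝ) : Y1 → ℝ := fun y1 => ∑ y2, pY (y1, y2)

/-- Source marginal `p(y₂)`. -/
def bpY2 (pY : Y1 × Y2 → ℝ) : Y2 → ℝ := fun y2 => ∑ y1, pY (y1, y2)

/-- Induced marginal `p(u₂) = Σ_{y₂} p(y₂) p(u₂|y₂)`. -/
def bpU2m (pY : Y1 × Y2 → ℝ) (p2 : Y2 → U2 → ℝ) : U2 → ℝ :=
  fun u2 => ∑ y2, bpY2 pY y2 * p2 y2 u2

/-- Induced joint `p(u₁,u₂,y₁) = Σ_{y₂} p(y₁,y₂) p(u₁|y₁) p(u₂|y₂)`. -/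
def bpUUY1 (pY : Y1 × Y2 → ℝ) (p1 : Y1 → U1 → ℝ) (p2 : Y2 → U2 → ℝ) :
    U1 × U2 × Y1 → ℝ :=
  fun z => ∑ y2, pY (z.2.2, y2) * p1 z.2.2 z.1 * p2 y2 z.2.1

/-- Induced joint `p(u₁,u₂,y₂) = Σ_{y₁} p(y₁,y₂) p(u₁|y₁) p(u₂|y₂)`. -/
def bpUUY2 (pY : Y1 × Y2 → ℝ) (p1 : Y1 → U1 → ℝ) (p2 : Y2 → U2 → ℝ) :
    U1 × U2 × Y2 → ℝ :=
  fun z => ∑ y1, pY (y1, z.2.2) * p1 y1 z.1 * p2 z.2.2 z.2.1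

/-- Induced marginal `p(u₁,u₂)`. -/
def bpUU (pY : Y1 × Y2 → ℝ) (p1 : Y1 → U1 → ℝ) (p2 : Y2 → U2 → ℝ) : U1 × U2 → ℝ :=
  fun u => ∑ y1, bpUUY1 pY p1 p2 (u.1, u.2, y1)

/-- The multiterminal Blahut–Arimoto functional `F_β(P,Q)` (real-valued version;
the convention `0 · log 0 = 0` is automatic since vanishing coefficients kill terms). -/
def FbPQ (s1 s2 a : ℝ) (pY : Y1 × Y2 → ℝ) (p1 : Y1 → U1 → ℝ) (p2 : Y2 → U2 → ℝ)
    (qY1 : U1 × U2 → Y1 → ℝ) (qY2 : U1 × U2 → Y2 → ℝ)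
    (qUU : U1 × U2 → ℝ) (qU2 : U2 → ℝ) : ℝ :=
  s1 * (∑ u1, ∑ y1, p1 y1 u1 * bpY1 pY y1 * Real.log (p1 y1 u1))
  + s2 * (∑ u2, ∑ y2, p2 y2 u2 * bpY2 pY y2 * Real.log (p2 y2 u2))
  + s1 * (∑ u2, bpU2m pY p2 u2 * Real.log (bpU2m pY p2 u2))
  - s2 * (∑ u2, bpU2m pY p2 u2 * Real.log (qU2 u2))
  - a * (∑ u1, ∑ u2, ∑ y1, bpUUY1 pY p1 p2 (u1, u2, y1) * Real.log (qY1 (u1, u2) y1))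
  - (1 - a) * (∑ u1, ∑ u2, ∑ y2, bpUUY2 pY p1 p2 (u1, u2, y2) * Real.log (qY2 (u1, u2) y2))
  - s1 * (∑ u1, ∑ u2, bpUU pY p1 p2 (u1, u2) * Real.log (qUU (u1, u2)))

/-- The multiterminal Blahut–Arimoto functional `F_β(P,Q)`, with values in `ℝ ∪ {+∞}`
(a term `−a log q` with positive coefficient and `q = 0` is `+∞`). -/
def FbPQE (s1 s2 a : ℝ) (pY : Y1 × Y2 → ℝ) (p1 : Y1 → U1 → ℝ) (p2 : Y2 → U2 → ℝ)
    (qY1 : U1 × U2 → Y1 → ℝ) (qY2 : U1 × U2 → Y2 → ℝ)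
    (qUU : U1 × U2 → ℝ) (qU2 : U2 → ℝ) : EReal :=
  ((s1 * (∑ u1, ∑ y1, p1 y1 u1 * bpY1 pY y1 * Real.log (p1 y1 u1))
    + s2 * (∑ u2, ∑ y2, p2 y2 u2 * bpY2 pY y2 * Real.log (p2 y2 u2))
    + s1 * (∑ u2, bpU2m pY p2 u2 * Real.log (bpU2m pY p2 u2)) : ℝ) : EReal)
  + (∑ u2, nlogE (s2 * bpU2m pY p2 u2) (qU2 u2))
  + (∑ u1, ∑ u2, ∑ y1, nlogE (a * bpUUY1 pY p1 p2 (u1, u2, y1)) (qY1 (u1, u2) y1))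
  + (∑ u1, ∑ u2, ∑ y2, nlogE ((1 - a) * bpUUY2 pY p1 p2 (u1, u2, y2)) (qY2 (u1, u2) y2))
  + (∑ u1, ∑ u2, nlogE (s1 * bpUU pY p1 p2 (u1, u2)) (qUU (u1, u2)))

variable {Qt : Type} [Fintype Qt]

/-- The joint pmf `p(q,y₁,y₂,u₁,u₂) = p(q)p(y₁,y₂)p(u₁|y₁,q)p(u₂|y₂,q)` induced by a
time-sharing variable `Q` and conditional test channels. -/
def btJointQ (pQ : Qt → ℝ) (pY : Y1 × Y2 → ℝ)
    (c1 : Qt → Y1 → U1 → ℝ) (c2 : Qt → Y2 → U2 → ℝ) :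
    Qt × Y1 × Y2 × U1 × U2 → ℝ :=
  fun z => pQ z.1 * pY (z.2.1, z.2.2.1) * c1 z.1 z.2.1 z.2.2.2.1 * c2 z.1 z.2.2.1 z.2.2.2.2

/-- Marginal `p(u₁,u₂,q)`. -/
def bqU12 (j : Qt × Y1 × Y2 × U1 × U2 → ℝ) : U1 × U2 × Qt → ℝ :=
  fun z => ∑ y1, ∑ y2, j (z.2.2, y1, y2, z.1, z.2.1)

/-- Marginal `p(u₂,q)`. -/
def bqU2 (j : Qt × Y1 × Y2 × U1 × U2 → ℝ) : U2 × Qt → ℝ :=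
  fun z => ∑ u1, bqU12 j (u1, z.1, z.2)

/-- Marginal `p(u₁,q)`. -/
def bqU1 (j : Qt × Y1 × Y2 × U1 × U2 → ℝ) : U1 × Qt → ℝ :=
  fun z => ∑ u2, bqU12 j (z.1, u2, z.2)

/-- Marginal `p(y₁,u₂,q)`. -/
def bqY1U2 (j : Qt × Y1 × Y2 × U1 × U2 → ℝ) : Y1 × U2 × Qt → ℝ :=
  fun z => ∑ y2, ∑ u1, j (z.2.2, z.1, y2, u1, z.2.1)

/-- Marginal `p(y₁,u₁,u₂,q)`. -/
def bqY1U12 (j : Qt × Y1 × Y2 × U1 × U2 → ℝ) : Y1 × U1 × U2 × Qt → ℝ :=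
  fun z => ∑ y2, j (z.2.2.2, z.1, y2, z.2.1, z.2.2.1)

/-- Marginal `p(y₂,u₁,q)`. -/
def bqY2U1 (j : Qt × Y1 × Y2 × U1 × U2 → ℝ) : Y2 × U1 × Qt → ℝ :=
  fun z => ∑ y1, ∑ u2, j (z.2.2, y1, z.1, z.2.1, u2)

/-- Marginal `p(y₂,u₁,u₂,q)`. -/
def bqY2U12 (j : Qt × Y1 × Y2 × U1 × U2 → ℝ) : Y2 × U1 × U2 × Qt → ℝ :=
  fun z => ∑ y1, j (z.2.2.2, y1, z.1, z.2.1, z.2.2.1)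

/-- Marginal `p(y₁,y₂,q)`. -/
def bqY12 (j : Qt × Y1 × Y2 × U1 × U2 → ℝ) : Y1 × Y2 × Qt → ℝ :=
  fun z => ∑ u1, ∑ u2, j (z.2.2, z.1, z.2.1, u1, u2)

/-- Marginal `p(q)`. -/
def bqQ (j : Qt × Y1 × Y2 × U1 × U2 → ℝ) : Qt → ℝ :=
  fun q => ∑ y1, ∑ y2, bqY12 j (y1, y2, q)

/-- Conditional mutual information `I(U₁;Y₁|U₂,Q)`. -/
def bIQ1 (j : Qt × Y1 × Y2 × U1 × U2 → ℝ) : ℝ :=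
  ent (bqY1U2 j) + ent (bqU12 j) - ent (bqU2 j) - ent (bqY1U12 j)

/-- Conditional mutual information `I(U₂;Y₂|U₁,Q)`. -/
def bIQ2 (j : Qt × Y1 × Y2 × U1 × U2 → ℝ) : ℝ :=
  ent (bqY2U1 j) + ent (bqU12 j) - ent (bqU1 j) - ent (bqY2U12 j)

/-- Conditional mutual information `I(U₁,U₂;Y₁,Y₂|Q)`. -/
def bIQsum (j : Qt × Y1 × Y2 × U1 × U2 → ℝ) : ℝ :=
  ent (bqY12 j) + ent (bqU12 j) - ent (bqQ j) - ent j

/-- Conditional entropy `H(Y₁|U₁,U₂,Q)`. -/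
def bHQ1 (j : Qt × Y1 × Y2 × U1 × U2 → ℝ) : ℝ := ent (bqY1U12 j) - ent (bqU12 j)

/-- Conditional entropy `H(Y₂|U₁,U₂,Q)`. -/
def bHQ2 (j : Qt × Y1 × Y2 × U1 × U2 → ℝ) : ℝ := ent (bqY2U12 j) - ent (bqU12 j)

/-!
A test-channel pair achieves the pentagon of rates with the corner points
`(I(Y₁;U₁|U₂), I(Y₂;U₂))` and `(I(Y₁;U₁), I(Y₂;U₂|U₁))`, which have the same sum rate and the same
distortions. Time sharing averages such pentagons, and each of them lies in the convex hull of what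
dominates its two corners; by Carathéodory's theorem in `ℝ⁴` five phases are enough. Hence `RD_BT`
is the convex hull of the upper closure of all corner points. On the other hand, the corner points
of one kind form a compact set, so by separation in the plane of distortions the region cut out by
the scalarized minima `Dⁱ_{BT,α}` lies between the upper closure of these points and its convex
hull.
-/

/-! ### Convex geometry -/

section ConvexHull

variable {E : Type*} [AddCommGroup E] [Module ℝ E] [FiniteDimensional ℝ E]

lemma exists_fin_sum_smul_eq_of_mem_convexHull {s : Set E} {x : E} (hx : x ∈ convexHull ℝ s) :
    ∃ m ≤ Module.finrank ℝ E + 1, ∃ w ∈ stdSimplex ℝ (Fin m), ∃ z : Fin m → E,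
      (∀ i, z i ∈ s) ∧ ∑ i, w i • z i = x := by
  obtain ⟨ι, _, z, w, hz, hind, hw, hw1, rfl⟩ := eq_pos_convex_span_of_mem_convexHull hx
  refine ⟨Fintype.card ι, hind.card_le_finrank_succ.trans
    (Nat.succ_le_succ (Submodule.finrank_le _)), ?_⟩
  let e := Fintype.equivFin ι
  refine ⟨w ∘ e.symm, ⟨fun i ↦ (hw _).le, (e.symm.sum_comp w).trans hw1⟩, z ∘ e.symm,
    fun i ↦ hz ⟨_, rfl⟩, e.symm.sum_comp fun i ↦ w i • z i⟩

lemma isCompact_convexHull [TopologicalSpace E] [ContinuousAdd E] [ContinuousSMul ℝ E] {s : Set E}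
    (hs : IsCompact s) : IsCompact (convexHull ℝ s) := by
  have hcompact (m : ℕ) : IsCompact ((fun p : (Fin m → ℝ) × (Fin m → E) ↦ ∑ i, p.1 i • p.2 i) ''
      stdSimplex ℝ (Fin m) ×ˢ Set.univ.pi fun _ ↦ s) :=
    ((isCompact_stdSimplex (𝕜 := ℝ) (Fin m)).prod (isCompact_univ_pi fun _ ↦ hs)).image
      (by fun_prop)
  convert (Set.finite_Iic (Module.finrank ℝ E + 1)).isCompact_biUnion fun m _ ↦ hcompact m using 1
  refine Set.Subset.antisymm (fun x hx ↦ ?_) ?_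
  · obtain ⟨m, hm, w, hw, z, hz, rfl⟩ := exists_fin_sum_smul_eq_of_mem_convexHull hx
    exact Set.mem_biUnion hm ⟨(w, z), ⟨hw, fun i _ ↦ hz i⟩, rfl⟩
  · simp only [Set.iUnion_subset_iff, Set.image_subset_iff]
    rintro m - ⟨w, z⟩ ⟨hw, hz⟩
    exact (convex_convexHull ℝ s).sum_mem (fun i _ ↦ hw.1 i) hw.2
      fun i _ ↦ subset_convexHull ℝ s (hz i trivial)

end ConvexHull

section UpperClosure

open scoped Pointwise

variable {E : Type*} [AddCommGroup E] [PartialOrder E] [IsOrderedAddMonoid E]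

lemma coe_upperClosure_eq_add_Ici_zero (s : Set E) : (upperClosure s : Set E) = s + Set.Ici 0 := by
  simpa using (add_upperClosure s ({0} : Set E)).symm

lemma convexHull_upperClosure [Module ℝ E] [PosSMulMono ℝ E] (s : Set E) :
    convexHull ℝ (upperClosure s : Set E) = upperClosure (convexHull ℝ s) := by
  rw [coe_upperClosure_eq_add_Ici_zero, convexHull_add, (convex_Ici 0).convexHull_eq,
    coe_upperClosure_eq_add_Ici_zero]

lemma isClosed_upperClosure_of_isCompact [TopologicalSpace E] [IsTopologicalAddGroup E]
    [ClosedIciTopology E] {s : Set E} (hs : IsCompact s) : IsClosed (upperClosure s : Set E) := by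
  rw [coe_upperClosure_eq_add_Ici_zero]
  exact isClosed_Ici.add_left_of_isCompact hs

lemma nonneg_of_isUpperSet_of_forall_le [Module ℝ E] [PosSMulMono ℝ E] {s : Set E}
    (hs : IsUpperSet s) (hne : s.Nonempty) {f : E →ₗ[ℝ] ℝ} {c : ℝ} (hf : ∀ x ∈ s, c ≤ f x)
    {v : E} (hv : 0 ≤ v) : 0 ≤ f v := by
  obtain ⟨x, hx⟩ := hne
  by_contra! hneg
  obtain ⟨t, ht⟩ := exists_nat_gt ((f x - c) / -f v)
  have hmem : x + (t : ℝ) • v ∈ s :=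
    hs (le_add_of_nonneg_right (smul_nonneg t.cast_nonneg hv)) hx
  have hle := hf _ hmem
  rw [map_add, map_smul, smul_eq_mul] at hle
  rw [div_lt_iff₀ (neg_pos.2 hneg)] at ht
  linarith

end UpperClosure

lemma mem_of_forall_le_weighted {s : Set (ℝ × ℝ)} (hconv : Convex ℝ s) (hclosed : IsClosed s)
    (hupper : IsUpperSet s) (hne : s.Nonempty) {d : ℝ × ℝ}
    (h : ∀ a ∈ Set.Icc (0 : ℝ) 1, ∀ c, (∀ p ∈ s, c ≤ a * p.1 + (1 - a) * p.2) →
      c ≤ a * d.1 + (1 - a) * d.2) : d ∈ s := by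
  by_contra hd
  obtain ⟨f, c, hfd, hfs⟩ := geometric_hahn_banach_point_closed hconv hclosed hd
  have hf (p : ℝ × ℝ) : f p = f (1, 0) * p.1 + f (0, 1) * p.2 := by
    conv_lhs => rw [show p = p.1 • ((1, 0) : ℝ × ℝ) + p.2 • ((0, 1) : ℝ × ℝ) by ext <;> simp]
    simp only [map_add, map_smul, smul_eq_mul, mul_comm]
  have hnonneg {v : ℝ × ℝ} (hv : 0 ≤ v) : 0 ≤ f v :=
    nonneg_of_isUpperSet_of_forall_le hupper hne (f := f) (fun p hp ↦ (hfs p hp).le) hv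
  have h₁ : 0 ≤ f (1, 0) := hnonneg ⟨zero_le_one, le_rfl⟩
  have h₂ : 0 ≤ f (0, 1) := hnonneg ⟨le_rfl, zero_le_one⟩
  have hpos : 0 < f (1, 0) + f (0, 1) := by
    refine (add_nonneg h₁ h₂).lt_of_ne fun h0 ↦ ?_
    obtain ⟨p, hp⟩ := hne
    have := hfs p hp
    rw [hf, (by linarith : f (1, 0) = 0), (by linarith : f (0, 1) = 0)] at hfd this
    linarith
  set a := f (1, 0) / (f (1, 0) + f (0, 1)) with ha
  have hweighted (p : ℝ × ℝ) :
      a * p.1 + (1 - a) * p.2 = f p / (f (1, 0) + f (0, 1)) := by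
    rw [hf, ha]; field_simp; ring
  have hle := h a ⟨by positivity, div_le_one_of_le₀ (by linarith) hpos.le⟩
    (c / (f (1, 0) + f (0, 1))) fun p hp ↦ by
      rw [hweighted]; gcongr; exact (hfs p hp).le
  rw [hweighted, div_le_div_iff_of_pos_right hpos] at hle
  linarith

lemma mem_upperClosure_convexHull_of_sInf_weighted_le {s : Set (ℝ × ℝ)} (hs : IsCompact s)
    (hne : s.Nonempty) {d : ℝ × ℝ}
    (h : ∀ a ∈ Set.Icc (0 : ℝ) 1,
      sInf ((fun p ↦ a * p.1 + (1 - a) * p.2) '' s) ≤ a * d.1 + (1 - a) * d.2) :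
    d ∈ upperClosure (convexHull ℝ s) := by
  have hconv : Convex ℝ (upperClosure (convexHull ℝ s) : Set (ℝ × ℝ)) := by
    rw [← convexHull_upperClosure]
    exact convex_convexHull ℝ _
  have hsubset : s ⊆ upperClosure (convexHull ℝ s) :=
    (subset_convexHull ℝ s).trans subset_upperClosure
  refine mem_of_forall_le_weighted hconv
    (isClosed_upperClosure_of_isCompact (isCompact_convexHull hs)) (UpperSet.upper _)
    (hne.mono hsubset) fun a ha c hc ↦ ?_
  refine (le_csInf (hne.image _) ?_).trans (h a ha)
  exact Set.forall_mem_image.2 fun p hp ↦ hc p (hsubset hp)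

/-! ### Regions cut out by scalarized distortions -/

/-- The set of rate-distortion quadruples `r = (R₁, R₂, D₁, D₂)` with nonnegative rates such that,
for every weight `a ∈ [0, 1]`, the weighted distortion `a D₁ + (1 - a) D₂` of `r` is at least the
infimum of the weighted distortions of those points of `s` whose rates are at most `(R₁, R₂)`. -/
def scalarizedRegion (s : Set (ℝ × ℝ × ℝ × ℝ)) : Set (ℝ × ℝ × ℝ × ℝ) :=
  {r | 0 ≤ r.1 ∧ 0 ≤ r.2.1 ∧ ∀ a ∈ Set.Icc (0 : ℝ) 1,
    sInf ((fun z ↦ a * z.2.2.1 + (1 - a) * z.2.2.2) '' {z ∈ s | z.1 ≤ r.1 ∧ z.2.1 ≤ r.2.1}) ≤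
      a * r.2.2.1 + (1 - a) * r.2.2.2}

section ScalarizedRegion

variable {s : Set (ℝ × ℝ × ℝ × ℝ)}

lemma upperClosure_subset_scalarizedRegion (hs : IsCompact s)
    (hnonneg : ∀ z ∈ s, 0 ≤ z.1 ∧ 0 ≤ z.2.1) :
    (upperClosure s : Set (ℝ × ℝ × ℝ × ℝ)) ⊆ scalarizedRegion s := by
  rintro r ⟨z, hz, hz₁, hz₂, hz₃, hz₄⟩
  refine ⟨(hnonneg z hz).1.trans hz₁, (hnonneg z hz).2.trans hz₂, fun a ha ↦ ?_⟩
  have hbdd := (hs.image (f := fun z ↦ a * z.2.2.1 + (1 - a) * z.2.2.2) (by fun_prop)).bddBelow.mono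
    (Set.image_mono (Set.sep_subset s fun z ↦ z.1 ≤ r.1 ∧ z.2.1 ≤ r.2.1))
  exact (csInf_le hbdd ⟨z, ⟨hz, hz₁, hz₂⟩, rfl⟩).trans
    (add_le_add (mul_le_mul_of_nonneg_left hz₃ ha.1)
      (mul_le_mul_of_nonneg_left hz₄ (sub_nonneg.2 ha.2)))

/-- Fixing the rates is an affine embedding of the plane of distortions, so it suffices to scalarize
within one slice. -/
lemma scalarizedRegion_subset_convexHull (hs : IsCompact s)
    (hzero : ∃ z ∈ s, z.1 ≤ 0 ∧ z.2.1 ≤ 0) :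
    scalarizedRegion s ⊆ convexHull ℝ (upperClosure s : Set (ℝ × ℝ × ℝ × ℝ)) := by
  rintro ⟨R₁, R₂, d⟩ ⟨hR₁, hR₂, hr⟩
  let feasible : Set (ℝ × ℝ × ℝ × ℝ) := {z ∈ s | z.1 ≤ R₁ ∧ z.2.1 ≤ R₂}
  have hcompact : IsCompact feasible := hs.inter_right
    ((isClosed_le continuous_fst continuous_const).inter
      (isClosed_le (continuous_fst.comp continuous_snd) continuous_const))
  have hne : feasible.Nonempty :=
    let ⟨z, hz, hz₁, hz₂⟩ := hzero; ⟨z, hz, hz₁.trans hR₁, hz₂.trans hR₂⟩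
  obtain ⟨e, he, hed⟩ : d ∈ upperClosure (convexHull ℝ ((fun z ↦ z.2.2) '' feasible)) :=
    mem_upperClosure_convexHull_of_sInf_weighted_le
      (hcompact.image (continuous_snd.comp continuous_snd)) (hne.image _) fun a ha ↦ by
        rw [Set.image_image]
        exact hr a ha
  let lift : ℝ × ℝ →ᵃ[ℝ] ℝ × ℝ × ℝ × ℝ :=
    (AffineMap.const ℝ _ R₁).prod ((AffineMap.const ℝ _ R₂).prod (AffineMap.id ℝ _))
  have hlift : lift '' ((fun z ↦ z.2.2) '' feasible) ⊆ upperClosure s := by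
    rintro _ ⟨_, ⟨z, ⟨hz, hz₁, hz₂⟩, rfl⟩, rfl⟩
    exact ⟨z, hz, hz₁, hz₂, le_rfl⟩
  have hle : lift e ≤ (R₁, R₂, d) := ⟨le_rfl, le_rfl, hed⟩
  have hmem := convexHull_mono hlift (lift.image_convexHull _ ▸ Set.mem_image_of_mem lift he)
  rw [convexHull_upperClosure] at hmem ⊢
  exact UpperSet.upper _ hle hmem

lemma convexHull_scalarizedRegion_union {t : Set (ℝ × ℝ × ℝ × ℝ)} (hs : IsCompact s)
    (ht : IsCompact t) (hs_nonneg : ∀ z ∈ s, 0 ≤ z.1 ∧ 0 ≤ z.2.1)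
    (ht_nonneg : ∀ z ∈ t, 0 ≤ z.1 ∧ 0 ≤ z.2.1) (hs_zero : ∃ z ∈ s, z.1 ≤ 0 ∧ z.2.1 ≤ 0)
    (ht_zero : ∃ z ∈ t, z.1 ≤ 0 ∧ z.2.1 ≤ 0) :
    convexHull ℝ (scalarizedRegion s ∪ scalarizedRegion t) =
      convexHull ℝ (upperClosure (s ∪ t) : Set (ℝ × ℝ × ℝ × ℝ)) := by
  rw [upperClosure_union, UpperSet.coe_inf]
  refine Set.Subset.antisymm (convexHull_min (Set.union_subset ?_ ?_) (convex_convexHull ℝ _))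
    (convexHull_mono (Set.union_subset_union (upperClosure_subset_scalarizedRegion hs hs_nonneg)
      (upperClosure_subset_scalarizedRegion ht ht_nonneg)))
  · exact (scalarizedRegion_subset_convexHull hs hs_zero).trans
      (convexHull_mono Set.subset_union_left)
  · exact (scalarizedRegion_subset_convexHull ht ht_zero).trans
      (convexHull_mono Set.subset_union_right)

end ScalarizedRegion

/-! ### Time sharing -/

/-- The quadruples `(R₁, R₂, D₁, D₂)` with `f₁ ≤ R₁`, `g₂ ≤ R₂`, `f₁ + f₂ ≤ R₁ + R₂` and distortions
at least those of `f`: when `f` and `g` have the same sum rate and the same distortions, and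
`f₁ ≤ g₁`, the rates form the unbounded pentagon with corners `(f₁, f₂)` and `(g₁, g₂)`. -/
def pentagon (f g : ℝ × ℝ × ℝ × ℝ) : Set (ℝ × ℝ × ℝ × ℝ) :=
  {r | f.1 ≤ r.1 ∧ g.2.1 ≤ r.2.1 ∧ f.1 + f.2.1 ≤ r.1 + r.2.1 ∧ f.2.2 ≤ r.2.2}

section Pentagon

variable {f g : ℝ × ℝ × ℝ × ℝ}

lemma Ici_left_subset_pentagon (hle : f.1 ≤ g.1) (hsum : f.1 + f.2.1 = g.1 + g.2.1) :
    Set.Ici f ⊆ pentagon f g := by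
  rintro r ⟨h₁, h₂, hd⟩
  exact ⟨h₁, by linarith, add_le_add h₁ h₂, hd⟩

lemma Ici_right_subset_pentagon (hle : f.1 ≤ g.1) (hsum : f.1 + f.2.1 = g.1 + g.2.1)
    (hdist : f.2.2 = g.2.2) : Set.Ici g ⊆ pentagon f g := by
  rintro r ⟨h₁, h₂, hd⟩
  exact ⟨hle.trans h₁, h₂, hsum ▸ add_le_add h₁ h₂, hdist ▸ hd⟩

/-- Either `g ≤ r`, or the point of the edge `[f, g]` with the first rate of `r` is at most `r`. -/
lemma pentagon_subset {s : Set (ℝ × ℝ × ℝ × ℝ)} (hconv : Convex ℝ s) (hupper : IsUpperSet s)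
    (hf : f ∈ s) (hg : g ∈ s) (hsum : f.1 + f.2.1 = g.1 + g.2.1) (hdist : f.2.2 = g.2.2) :
    pentagon f g ⊆ s := by
  rintro r ⟨h₁, h₂, h₁₂, hd⟩
  obtain hr | hr := le_or_gt g.1 r.1
  · exact hupper (show g ≤ r from ⟨hr, h₂, hdist ▸ hd⟩) hg
  · have hpos : 0 < g.1 - f.1 := by linarith
    let t := (r.1 - f.1) / (g.1 - f.1)
    have ht₁ : f.1 + t * (g.1 - f.1) = r.1 := by simp [t, hpos.ne']
    have hmem := hconv hf hg (a := 1 - t) (b := t)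
      (sub_nonneg.2 (div_le_one_of_le₀ (by linarith) hpos.le))
      (div_nonneg (by linarith) hpos.le) (by ring)
    refine hupper (show _ ≤ r from ⟨?_, ?_, ?_⟩) hmem
    · simp only [Prod.fst_add, Prod.smul_fst, smul_eq_mul]
      linarith
    · simp only [Prod.fst_add, Prod.snd_add, Prod.smul_fst, Prod.smul_snd, smul_eq_mul]
      rw [show f.2.1 = g.1 + g.2.1 - f.1 by linarith]
      linarith
    · simpa [← hdist, ← add_smul] using hd

variable {ι : Type*} [Fintype ι] {w : ι → ℝ} {F G : ι → ℝ × ℝ × ℝ × ℝ}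

lemma sum_smul_mem_pentagon {z : ι → ℝ × ℝ × ℝ × ℝ} (hw : ∀ i, 0 ≤ w i)
    (hz : ∀ i, z i ∈ pentagon (F i) (G i)) :
    ∑ i, w i • z i ∈ pentagon (∑ i, w i • F i) (∑ i, w i • G i) := by
  simp only [pentagon, Set.mem_ofPred_eq, Prod.fst_sum, Prod.snd_sum, Prod.smul_fst, Prod.smul_snd,
    smul_eq_mul, ← sum_add_distrib, ← mul_add]
  exact ⟨sum_le_sum fun i _ ↦ mul_le_mul_of_nonneg_left (hz i).1 (hw i),
    sum_le_sum fun i _ ↦ mul_le_mul_of_nonneg_left (hz i).2.1 (hw i),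
    sum_le_sum fun i _ ↦ mul_le_mul_of_nonneg_left (hz i).2.2.1 (hw i),
    sum_le_sum fun i _ ↦ smul_le_smul_of_nonneg_left (hz i).2.2.2 (hw i)⟩

/-- By Carathéodory's theorem, five time-sharing phases suffice in `ℝ⁴`. -/
lemma mem_convexHull_upperClosure_iff_exists_pentagon {X : Type*} {K : Set X}
    {F G : X → ℝ × ℝ × ℝ × ℝ} (hle : ∀ x ∈ K, (F x).1 ≤ (G x).1)
    (hsum : ∀ x ∈ K, (F x).1 + (F x).2.1 = (G x).1 + (G x).2.1)
    (hdist : ∀ x ∈ K, (F x).2.2 = (G x).2.2) {N : ℕ} (hN : 5 ≤ N) {r : ℝ × ℝ × ℝ × ℝ} :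
    r ∈ convexHull ℝ (upperClosure (F '' K ∪ G '' K) : Set (ℝ × ℝ × ℝ × ℝ)) ↔
      ∃ m ≤ N, ∃ w ∈ stdSimplex ℝ (Fin m), ∃ x : Fin m → X, (∀ q, x q ∈ K) ∧
        r ∈ pentagon (∑ q, w q • F (x q)) (∑ q, w q • G (x q)) := by
  constructor
  · intro hr
    obtain ⟨m, hm, w, hw, z, hz, rfl⟩ := exists_fin_sum_smul_eq_of_mem_convexHull hr
    have hpentagon (q : Fin m) : ∃ x ∈ K, z q ∈ pentagon (F x) (G x) := by
      obtain ⟨_, ⟨x, hx, rfl⟩ | ⟨x, hx, rfl⟩, hxz⟩ := hz q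
      · exact ⟨x, hx, Ici_left_subset_pentagon (hle x hx) (hsum x hx) hxz⟩
      · exact ⟨x, hx, Ici_right_subset_pentagon (hle x hx) (hsum x hx) (hdist x hx) hxz⟩
    choose x hx hzx using hpentagon
    simp only [Module.finrank_prod, Module.finrank_self] at hm
    exact ⟨m, hm.trans hN, w, hw, x, hx, sum_smul_mem_pentagon hw.1 hzx⟩
  · rintro ⟨m, -, w, hw, x, hx, hr⟩
    have hupper : IsUpperSet (convexHull ℝ
        (upperClosure (F '' K ∪ G '' K) : Set (ℝ × ℝ × ℝ × ℝ))) :=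
      convexHull_upperClosure (F '' K ∪ G '' K) ▸ UpperSet.upper _
    have hconv := convex_convexHull ℝ (upperClosure (F '' K ∪ G '' K) : Set (ℝ × ℝ × ℝ × ℝ))
    have hF := hconv.sum_mem (t := univ) (fun q _ ↦ hw.1 q) hw.2 fun q _ ↦
      subset_convexHull ℝ _ (subset_upperClosure (.inl ⟨x q, hx q, rfl⟩))
    have hG := hconv.sum_mem (t := univ) (fun q _ ↦ hw.1 q) hw.2 fun q _ ↦
      subset_convexHull ℝ _ (subset_upperClosure (.inr ⟨x q, hx q, rfl⟩))
    refine pentagon_subset hconv hupper hF hG ?_ ?_ hr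
    · simp only [Prod.fst_sum, Prod.snd_sum, Prod.smul_fst, Prod.smul_snd, ← sum_add_distrib,
        ← smul_add, hsum _ (hx _)]
    · simp only [Prod.snd_sum, Prod.smul_snd, hdist _ (hx _)]

end Pentagon

/-! ### Entropy on finite alphabets -/

lemma IsPmf.nonempty {α : Type} [Fintype α] {p : α → ℝ} (hp : IsPmf p) : Nonempty α := by
  by_contra h
  rw [not_nonempty_iff] at h
  simpa using hp.2

lemma isPmf_single {α : Type} [Fintype α] [DecidableEq α] (a : α) :
    IsPmf (Pi.single a 1 : α → ℝ) := single_mem_stdSimplex ℝ a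

section Entropy

variable {α β : Type} [Fintype α] [Fintype β]

lemma ent_comp_equiv (e : α ≃ β) (p : β → ℝ) : ent (p ∘ e) = ent p :=
  e.sum_comp fun b ↦ negMulLog (p b)

lemma ent_eq_sum_ent (p : α × β → ℝ) : ent p = ∑ a, ent fun b ↦ p (a, b) :=
  Fintype.sum_prod_type _

lemma ent_eq_sum_ent_of_equiv {γ : Type} [Fintype γ] (e : γ × α ≃ β) (p : β → ℝ) :
    ent p = ∑ c, ent fun a ↦ p (e (c, a)) :=
  (ent_comp_equiv e p).symm.trans (ent_eq_sum_ent _)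

lemma ent_const_mul (c : ℝ) (p : α → ℝ) :
    ent (fun a ↦ c * p a) = c * ent p + (∑ a, p a) * negMulLog c := by
  simp only [ent, negMulLog_mul, sum_add_distrib, ← mul_sum, ← sum_mul]
  ring

/-- The conditional entropy `H(B|A)` of the output `B` of the channel `w` given its input `A`, when
the input has distribution `p`. -/
def chanEnt (p : α → ℝ) (w : α → β → ℝ) : ℝ := ∑ a, p a * ent (w a)

lemma ent_mul_chan (p : α → ℝ) {w : α → β → ℝ} (hw : IsChan w) :
    ent (fun z : α × β ↦ p z.1 * w z.1 z.2) = ent p + chanEnt p w := by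
  simp only [ent_eq_sum_ent (α := α), ent_const_mul, (hw _).2, one_mul, sum_add_distrib, chanEnt]
  exact add_comm _ _

lemma chanEnt_const {p : α → ℝ} (hp : IsPmf p) (v : β → ℝ) : chanEnt p (fun _ ↦ v) = ent v := by
  rw [chanEnt, ← sum_mul, hp.2, one_mul]

lemma ent_le_neg_sum_mul_log {r q : α → ℝ} (hr : ∀ a, 0 ≤ r a) (hq : ∀ a, 0 ≤ q a)
    (hrq : ∀ a, q a = 0 → r a = 0) (hsum : ∑ a, q a = ∑ a, r a) :
    ent r ≤ -∑ a, r a * log (q a) := by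
  have hle (a : α) : negMulLog (r a) + r a * log (q a) ≤ q a - r a := by
    obtain hra | hra := (hr a).eq_or_lt
    · simp [← hra, hq a]
    · have hqa : 0 < q a := (hq a).lt_of_ne fun h ↦ hra.ne' (hrq a h.symm)
      have hlog := log_le_sub_one_of_pos (div_pos hqa hra)
      rw [log_div hqa.ne' hra.ne'] at hlog
      have hmul := mul_le_mul_of_nonneg_left hlog hra.le
      rw [mul_sub, mul_sub, mul_div_cancel₀ _ hra.ne'] at hmul
      rw [negMulLog]
      linarith
  have := sum_le_sum fun a (_ : a ∈ univ) ↦ hle a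
  rw [sum_add_distrib, sum_sub_distrib, hsum, sub_self] at this
  rw [ent]
  linarith

/-- This is Gibbs' inequality for the normalized product of the marginals. -/
lemma ent_add_negMulLog_sum_le {p : α × β → ℝ} (hp : ∀ z, 0 ≤ p z) :
    ent p + negMulLog (∑ z, p z) ≤
      ent (fun a ↦ ∑ b, p (a, b)) + ent fun b ↦ ∑ a, p (a, b) := by
  set f : α → ℝ := fun a ↦ ∑ b, p (a, b) with hf
  set g : β → ℝ := fun b ↦ ∑ a, p (a, b) with hg
  set S := ∑ z, p z with hS
  have hSf : ∑ a, f a = S := (Fintype.sum_prod_type p).symm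
  have hSg : ∑ b, g b = S := (Fintype.sum_prod_type_right p).symm
  have hpf (z : α × β) : p z ≤ f z.1 :=
    single_le_sum (f := fun b ↦ p (z.1, b)) (fun b _ ↦ hp (z.1, b)) (mem_univ z.2)
  have hpg (z : α × β) : p z ≤ g z.2 :=
    single_le_sum (f := fun a ↦ p (a, z.2)) (fun a _ ↦ hp (a, z.2)) (mem_univ z.1)
  have hpS (z : α × β) : p z ≤ S := single_le_sum (fun z _ ↦ hp z) (mem_univ z)
  have hpos {z : α × β} (hz : 0 < p z) : 0 < f z.1 ∧ 0 < g z.2 ∧ 0 < S :=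
    ⟨hz.trans_le (hpf z), hz.trans_le (hpg z), hz.trans_le (hpS z)⟩
  have hsum : ∑ z : α × β, f z.1 * g z.2 / S = S := by
    simp only [← sum_div, Fintype.sum_prod_type, ← mul_sum, ← sum_mul, hSf, hSg]
    exact mul_self_div_self S
  have hgibbs : ent p ≤ -∑ z, p z * log (f z.1 * g z.2 / S) := by
    refine ent_le_neg_sum_mul_log hp (fun z ↦ ?_) (fun z hz ↦ ?_) hsum
    · exact div_nonneg (mul_nonneg ((hp z).trans (hpf z)) ((hp z).trans (hpg z)))
        ((hp z).trans (hpS z))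
    · by_contra hne
      obtain ⟨hfz, hgz, hSz⟩ := hpos ((hp z).lt_of_ne' hne)
      exact (div_pos (mul_pos hfz hgz) hSz).ne' hz
  have hlog (z : α × β) : p z * log (f z.1 * g z.2 / S) =
      p z * log (f z.1) + p z * log (g z.2) - p z * log S := by
    obtain h0 | hz := (hp z).eq_or_lt
    · simp [← h0]
    · obtain ⟨hfz, hgz, hSz⟩ := hpos hz
      rw [log_div (mul_pos hfz hgz).ne' hSz.ne', log_mul hfz.ne' hgz.ne']
      ring
  have hsum_f : ∑ z : α × β, p z * log (f z.1) = -ent f := by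
    simp [ent, negMulLog, hf, sum_mul, Fintype.sum_prod_type]
  have hsum_g : ∑ z : α × β, p z * log (g z.2) = -ent g := by
    simp [ent, negMulLog, hg, sum_mul, Fintype.sum_prod_type_right]
  simp only [hlog, sum_sub_distrib, sum_add_distrib, hsum_f, hsum_g, ← sum_mul, ← hS] at hgibbs
  rw [negMulLog]
  linarith

end Entropy

/-! ### Berger–Tung information quantities -/

section Marginals

variable (j : Y1 × Y2 × U1 × U2 → ℝ)

/-- The joint weights with the roles of the two users exchanged: statements about the second user
follow from those about the first one. -/
def swapUsers : Y2 × Y1 × U2 × U1 → ℝ := fun z ↦ j (z.2.1, z.1, z.2.2.2, z.2.2.1)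

omit [Fintype U1] in
lemma bU2_swapUsers : bU2 (swapUsers j) = bU1 j :=
  funext fun _ ↦ sum_congr rfl fun _ _ ↦ sum_comm

omit [Fintype U2] in
lemma bU1_swapUsers : bU1 (swapUsers j) = bU2 j :=
  funext fun _ ↦ sum_congr rfl fun _ _ ↦ sum_comm

lemma ent_bU12_swapUsers : ent (bU12 (swapUsers j)) = ent (bU12 j) := by
  have hU12 : bU12 (swapUsers j) = bU12 j ∘ Prod.swap := funext fun _ ↦ sum_comm
  rw [hU12]
  exact ent_comp_equiv (Equiv.prodComm _ _) _

lemma ent_bY1U_swapUsers : ent (bY1U (swapUsers j)) = ent (bY2U j) :=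
  ent_comp_equiv ((Equiv.refl _).prodCongr (Equiv.prodComm _ _)) (bY2U j)

lemma bH1_swapUsers : bH1 (swapUsers j) = bH2 j := by
  rw [bH1, bH2, ent_bU12_swapUsers, ent_bY1U_swapUsers]

lemma bI1c_swapUsers : bI1c (swapUsers j) = bI2c j := by
  rw [bI1c, bI2c, ent_bU12_swapUsers, ent_bY1U_swapUsers, bU2_swapUsers]
  rfl

lemma bI1m_swapUsers : bI1m (swapUsers j) = bI2m j := by
  have hY1U1 : bY1U1 (swapUsers j) = bY2U2 j := rfl
  have hY1 : bY1 (swapUsers j) = bY2 j := funext fun _ ↦ sum_comm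
  rw [bI1m, bI2m, hY1U1, hY1, bU1_swapUsers]

lemma sum_bY1U : ∑ z, bY1U j z = ∑ z, j z := by
  rw [Fintype.sum_prod_type, Fintype.sum_prod_type]
  exact sum_congr rfl fun y1 _ ↦ (Fintype.sum_prod_type_right fun z : Y2 × U1 × U2 ↦ j (y1, z)).symm

lemma sum_bU12 : ∑ u, bU12 j u = ∑ z, j z := by
  rw [← sum_bY1U]
  exact (Fintype.sum_prod_type_right _).symm

lemma sum_bU2 : ∑ u, bU2 j u = ∑ z, j z := by
  rw [← sum_bU12, Fintype.sum_prod_type_right]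
  rfl

lemma sum_bY1U2 : ∑ z, bY1U2 j z = ∑ z, j z := by
  rw [← sum_bY1U]
  simp only [Fintype.sum_prod_type, bY1U2]
  exact sum_congr rfl fun _ _ ↦ sum_comm

/-- The marginal `p(y₁,y₂)`. -/
def bY12 : Y1 × Y2 → ℝ := fun z ↦ ∑ u1, ∑ u2, j (z.1, z.2, u1, u2)

lemma sum_bY12 : ∑ z, bY12 j z = ∑ z, j z := by
  simp only [bY12, Fintype.sum_prod_type]

/-- The mutual information `I(U₁,U₂;Y₁,Y₂)`. The third summand vanishes when `j` is a pmf; it makes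
the expression homogeneous in `j`. -/
def bIsum : ℝ := ent (bY12 j) + ent (bU12 j) - negMulLog (∑ z, j z) - ent j

end Marginals

section Homogeneity

variable (c : ℝ) (j : Y1 × Y2 × U1 × U2 → ℝ)

omit [Fintype Y1] [Fintype U1] [Fintype U2] in
lemma bY1U_const_mul : bY1U (fun z ↦ c * j z) = fun z ↦ c * bY1U j z :=
  funext fun _ ↦ (mul_sum _ _ _).symm

omit [Fintype U1] [Fintype U2] in
lemma bU12_const_mul : bU12 (fun z ↦ c * j z) = fun z ↦ c * bU12 j z :=
  funext fun _ ↦ by simp only [bU12, bY1U_const_mul, mul_sum]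

lemma bH1_const_mul : bH1 (fun z ↦ c * j z) = c * bH1 j := by
  rw [bH1, bH1, bY1U_const_mul, bU12_const_mul, ent_const_mul, ent_const_mul, sum_bY1U, sum_bU12]
  ring

lemma bH2_const_mul : bH2 (fun z ↦ c * j z) = c * bH2 j := by
  rw [← bH1_swapUsers, ← bH1_swapUsers, ← bH1_const_mul]
  rfl

lemma bI1c_const_mul : bI1c (fun z ↦ c * j z) = c * bI1c j := by
  have hU2 : bU2 (fun z ↦ c * j z) = fun u ↦ c * bU2 j u :=
    funext fun _ ↦ by simp only [bU2, bU12_const_mul, mul_sum]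
  have hY1U2 : bY1U2 (fun z ↦ c * j z) = fun z ↦ c * bY1U2 j z :=
    funext fun _ ↦ by simp only [bY1U2, bY1U_const_mul, mul_sum]
  rw [bI1c, bI1c, bY1U_const_mul, bU12_const_mul, hU2, hY1U2]
  simp only [ent_const_mul, sum_bY1U, sum_bU12, sum_bU2, sum_bY1U2]
  ring

lemma bI2c_const_mul : bI2c (fun z ↦ c * j z) = c * bI2c j := by
  rw [← bI1c_swapUsers, ← bI1c_swapUsers, ← bI1c_const_mul]
  rfl

lemma bIsum_const_mul : bIsum (fun z ↦ c * j z) = c * bIsum j := by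
  have hY12 : bY12 (fun z ↦ c * j z) = fun z ↦ c * bY12 j z :=
    funext fun _ ↦ by simp only [bY12, mul_sum]
  rw [bIsum, bIsum, bU12_const_mul, hY12, ← mul_sum, negMulLog_mul]
  simp only [ent_const_mul, sum_bU12, sum_bY12]
  ring

end Homogeneity

section Nonnegativity

variable {j : Y1 × Y2 × U1 × U2 → ℝ}

lemma ent_bU12_le (hj : IsPmf j) : ent (bU12 j) ≤ ent (bU1 j) + ent (bU2 j) := by
  have hU12 (u : U1 × U2) : 0 ≤ bU12 j u :=
    sum_nonneg fun _ _ ↦ sum_nonneg fun _ _ ↦ hj.1 _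
  have := ent_add_negMulLog_sum_le hU12
  rwa [sum_bU12, hj.2, negMulLog_one, add_zero] at this

/-- For each value of `u₂` this is the subadditivity of entropy. -/
lemma bI1c_nonneg (hj : ∀ z, 0 ≤ j z) : 0 ≤ bI1c j := by
  have hslice (u2 : U2) :
      ent (fun z : Y1 × U1 ↦ bY1U j (z.1, z.2, u2)) + negMulLog (bU2 j u2) ≤
        ent (fun y1 ↦ bY1U2 j (y1, u2)) + ent fun u1 ↦ bU12 j (u1, u2) := by
    have hY1U (z : Y1 × U1) : 0 ≤ bY1U j (z.1, z.2, u2) := sum_nonneg fun _ _ ↦ hj _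
    have := ent_add_negMulLog_sum_le hY1U
    rwa [Fintype.sum_prod_type_right] at this
  have hsum := sum_le_sum fun u2 (_ : u2 ∈ univ) ↦ hslice u2
  rw [sum_add_distrib, sum_add_distrib] at hsum
  have hY1U : ent (bY1U j) = ∑ u2, ent fun z : Y1 × U1 ↦ bY1U j (z.1, z.2, u2) :=
    ent_eq_sum_ent_of_equiv ((Equiv.prodComm _ _).trans (Equiv.prodAssoc _ _ _)) _
  have hY1U2 : ent (bY1U2 j) = ∑ u2, ent fun y1 ↦ bY1U2 j (y1, u2) :=
    ent_eq_sum_ent_of_equiv (Equiv.prodComm _ _) _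
  have hU12 : ent (bU12 j) = ∑ u2, ent fun u1 ↦ bU12 j (u1, u2) :=
    ent_eq_sum_ent_of_equiv (Equiv.prodComm _ _) _
  have hU2 : ent (bU2 j) = ∑ u2, negMulLog (bU2 j u2) := rfl
  rw [bI1c, hY1U, hY1U2, hU12, hU2]
  linarith

lemma bI2c_nonneg (hj : ∀ z, 0 ≤ j z) : 0 ≤ bI2c j := by
  rw [← bI1c_swapUsers]
  exact bI1c_nonneg fun _ ↦ hj _

end Nonnegativity

/-! ### Test channels -/

section TestChannels

variable {pY : Y1 × Y2 → ℝ} {p1 : Y1 → U1 → ℝ} {p2 : Y2 → U2 → ℝ}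

lemma isPmf_bpY1 (hpY : IsPmf pY) : IsPmf (bpY1 pY) :=
  ⟨fun _ ↦ sum_nonneg fun _ _ ↦ hpY.1 _, by simpa only [bpY1, Fintype.sum_prod_type] using hpY.2⟩

lemma isPmf_comp_swap (hpY : IsPmf pY) : IsPmf (pY ∘ Prod.swap) :=
  ⟨fun _ ↦ hpY.1 _, ((Equiv.prodComm _ _).sum_comp pY).trans hpY.2⟩

lemma isPmf_btJoint (hpY : IsPmf pY) (h1 : IsChan p1) (h2 : IsChan p2) :
    IsPmf (btJoint pY p1 p2) := by
  refine ⟨fun z ↦ mul_nonneg (mul_nonneg (hpY.1 _) ((h1 _).1 _)) ((h2 _).1 _), ?_⟩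
  have hpY_sum := hpY.2
  rw [Fintype.sum_prod_type] at hpY_sum
  simp only [btJoint, Fintype.sum_prod_type, ← mul_sum, (h1 _).2, (h2 _).2, mul_one, hpY_sum]

omit [Fintype Y1] [Fintype Y2] [Fintype U1] [Fintype U2] in
lemma swapUsers_btJoint : swapUsers (btJoint pY p1 p2) = btJoint (pY ∘ Prod.swap) p2 p1 :=
  funext fun _ ↦ mul_right_comm _ _ _

omit [Fintype U2] in
lemma bY1U_btJoint (h1 : IsChan p1) (z : Y1 × U1 × U2) :
    bY1U (btJoint pY p1 p2) z = bY1U2 (btJoint pY p1 p2) (z.1, z.2.2) * p1 z.1 z.2.1 := by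
  have hmul (u1 : U1) : bY1U (btJoint pY p1 p2) (z.1, u1, z.2.2) =
      p1 z.1 u1 * ∑ y2, pY (z.1, y2) * p2 y2 z.2.2 := by
    rw [bY1U, mul_sum]
    exact sum_congr rfl fun _ _ ↦ by rw [btJoint]; ring
  simp only [bY1U2, hmul, ← sum_mul, (h1 _).2, one_mul]
  exact mul_comm _ _

lemma sum_bY1U2_btJoint (h1 : IsChan p1) (h2 : IsChan p2) (y1 : Y1) :
    ∑ u2, bY1U2 (btJoint pY p1 p2) (y1, u2) = bpY1 pY y1 := by
  simp only [bY1U2, bY1U, btJoint, bpY1]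
  rw [sum_comm]
  simp only [sum_comm (s := (univ : Finset U2)), ← mul_sum, (h2 _).2, mul_one]
  rw [sum_comm]
  simp only [← mul_sum, (h1 _).2, mul_one]

lemma bY1U1_btJoint (h1 : IsChan p1) (h2 : IsChan p2) :
    bY1U1 (btJoint pY p1 p2) = fun z ↦ bpY1 pY z.1 * p1 z.1 z.2 := by
  funext z
  simp only [bY1U1, bY1U_btJoint h1, ← sum_mul, sum_bY1U2_btJoint h1 h2]

lemma ent_bY1U_btJoint (h1 : IsChan p1) (h2 : IsChan p2) :
    ent (bY1U (btJoint pY p1 p2)) =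
      ent (bY1U2 (btJoint pY p1 p2)) + chanEnt (bpY1 pY) p1 := by
  let e : (Y1 × U2) × U1 ≃ Y1 × U1 × U2 :=
    (Equiv.prodAssoc _ _ _).trans ((Equiv.refl _).prodCongr (Equiv.prodComm _ _))
  have hcomp : bY1U (btJoint pY p1 p2) ∘ e =
      fun z ↦ bY1U2 (btJoint pY p1 p2) z.1 * p1 z.1.1 z.2 := funext fun z ↦ bY1U_btJoint h1 (e z)
  rw [← ent_comp_equiv e, hcomp, ent_mul_chan _ (w := fun z : Y1 × U2 ↦ p1 z.1) fun z ↦ h1 z.1]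
  simp only [chanEnt, Fintype.sum_prod_type, ← sum_mul, sum_bY1U2_btJoint h1 h2]

lemma bI1c_btJoint (h1 : IsChan p1) (h2 : IsChan p2) :
    bI1c (btJoint pY p1 p2) = ent (bU12 (btJoint pY p1 p2)) - ent (bU2 (btJoint pY p1 p2))
      - chanEnt (bpY1 pY) p1 := by
  rw [bI1c, ent_bY1U_btJoint h1 h2]
  ring

lemma bI1m_btJoint (h1 : IsChan p1) (h2 : IsChan p2) :
    bI1m (btJoint pY p1 p2) = ent (bU1 (btJoint pY p1 p2)) - chanEnt (bpY1 pY) p1 := by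
  have hY1 : bY1 (btJoint pY p1 p2) = bpY1 pY := funext (sum_bY1U2_btJoint h1 h2)
  rw [bI1m, hY1, bY1U1_btJoint h1 h2, ent_mul_chan _ h1]
  ring

lemma bI2c_btJoint (h1 : IsChan p1) (h2 : IsChan p2) :
    bI2c (btJoint pY p1 p2) = ent (bU12 (btJoint pY p1 p2)) - ent (bU1 (btJoint pY p1 p2))
      - chanEnt (bpY2 pY) p2 := by
  rw [← bI1c_swapUsers, ← ent_bU12_swapUsers, ← bU2_swapUsers, swapUsers_btJoint,
    bI1c_btJoint h2 h1]
  rfl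

lemma bI2m_btJoint (h1 : IsChan p1) (h2 : IsChan p2) :
    bI2m (btJoint pY p1 p2) = ent (bU2 (btJoint pY p1 p2)) - chanEnt (bpY2 pY) p2 := by
  rw [← bI1m_swapUsers, ← bU1_swapUsers, swapUsers_btJoint, bI1m_btJoint h2 h1]
  rfl

lemma ent_btJoint (h1 : IsChan p1) (h2 : IsChan p2) :
    ent (btJoint pY p1 p2) = ent pY + chanEnt (bpY1 pY) p1 + chanEnt (bpY2 pY) p2 := by
  have hprod : IsChan fun (y : Y1 × Y2) (u : U1 × U2) ↦ p1 y.1 u.1 * p2 y.2 u.2 := fun y ↦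
    ⟨fun u ↦ mul_nonneg ((h1 _).1 _) ((h2 _).1 _), by
      simp only [Fintype.sum_prod_type, ← mul_sum, (h1 _).2, (h2 _).2, mul_one]⟩
  have hent (y : Y1 × Y2) :
      ent (fun u : U1 × U2 ↦ p1 y.1 u.1 * p2 y.2 u.2) = ent (p1 y.1) + ent (p2 y.2) := by
    rw [ent_mul_chan (p1 y.1) (w := fun _ ↦ p2 y.2) fun _ ↦ h2 y.2, chanEnt_const (h1 y.1)]
  have hcomp : btJoint pY p1 p2 ∘ Equiv.prodAssoc Y1 Y2 (U1 × U2) =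
      fun z ↦ pY z.1 * (p1 z.1.1 z.2.1 * p2 z.1.2 z.2.2) := funext fun _ ↦ mul_assoc _ _ _
  rw [← ent_comp_equiv (Equiv.prodAssoc _ _ _), hcomp, ent_mul_chan pY hprod]
  simp only [chanEnt, hent, mul_add, sum_add_distrib, bpY1, bpY2, sum_mul,
    Fintype.sum_prod_type]
  rw [sum_comm (s := (univ : Finset Y2)), add_assoc]

lemma bIsum_btJoint (hpY : IsPmf pY) (h1 : IsChan p1) (h2 : IsChan p2) :
    bIsum (btJoint pY p1 p2) = ent (bU12 (btJoint pY p1 p2)) - chanEnt (bpY1 pY) p1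
      - chanEnt (bpY2 pY) p2 := by
  have hY12 : bY12 (btJoint pY p1 p2) = pY := by
    funext z
    simp only [bY12, btJoint, ← mul_sum, (h1 _).2, (h2 _).2, mul_one]
  rw [bIsum, hY12, (isPmf_btJoint hpY h1 h2).2, negMulLog_one, ent_btJoint h1 h2]
  ring

lemma bI1c_add_bI2m_btJoint (hpY : IsPmf pY) (h1 : IsChan p1) (h2 : IsChan p2) :
    bI1c (btJoint pY p1 p2) + bI2m (btJoint pY p1 p2) = bIsum (btJoint pY p1 p2) := by
  rw [bI1c_btJoint h1 h2, bI2m_btJoint h1 h2, bIsum_btJoint hpY h1 h2]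
  ring

lemma bI1m_add_bI2c_btJoint (hpY : IsPmf pY) (h1 : IsChan p1) (h2 : IsChan p2) :
    bI1m (btJoint pY p1 p2) + bI2c (btJoint pY p1 p2) = bIsum (btJoint pY p1 p2) := by
  rw [bI1m_btJoint h1 h2, bI2c_btJoint h1 h2, bIsum_btJoint hpY h1 h2]
  ring

lemma bI1c_le_bI1m_btJoint (hpY : IsPmf pY) (h1 : IsChan p1) (h2 : IsChan p2) :
    bI1c (btJoint pY p1 p2) ≤ bI1m (btJoint pY p1 p2) := by
  rw [bI1c_btJoint h1 h2, bI1m_btJoint h1 h2]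
  linarith [ent_bU12_le (isPmf_btJoint hpY h1 h2)]

lemma bI1m_btJoint_const (hpY : IsPmf pY) {v : U1 → ℝ} (hv : IsPmf v) (h2 : IsChan p2) :
    bI1m (btJoint pY (fun _ ↦ v) p2) = 0 := by
  have h1 : IsChan fun _ : Y1 ↦ v := fun _ ↦ hv
  have hU1 : bU1 (btJoint pY (fun _ ↦ v) p2) = v := by
    funext u1
    calc bU1 (btJoint pY (fun _ ↦ v) p2) u1
        = ∑ y1, bY1U1 (btJoint pY (fun _ ↦ v) p2) (y1, u1) := sum_comm
      _ = v u1 := by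
        simp only [bY1U1_btJoint h1 h2, ← sum_mul, (isPmf_bpY1 hpY).2, one_mul]
  rw [bI1m_btJoint h1 h2, hU1, chanEnt_const (isPmf_bpY1 hpY), sub_self]

lemma bI2m_btJoint_const (hpY : IsPmf pY) (h1 : IsChan p1) {v : U2 → ℝ} (hv : IsPmf v) :
    bI2m (btJoint pY p1 (fun _ ↦ v)) = 0 := by
  rw [← bI1m_swapUsers, swapUsers_btJoint, bI1m_btJoint_const (isPmf_comp_swap hpY) hv h1]

end TestChannels

/-! ### Time-sharing mixtures -/

section TimeSharing

variable (j : Qt × Y1 × Y2 × U1 × U2 → ℝ)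

lemma ent_bqU12 : ent (bqU12 j) = ∑ q, ent (bU12 fun z ↦ j (q, z)) :=
  ent_eq_sum_ent_of_equiv ((Equiv.prodComm _ _).trans (Equiv.prodAssoc _ _ _)) (bqU12 j)

lemma ent_bqU2 : ent (bqU2 j) = ∑ q, ent (bU2 fun z ↦ j (q, z)) :=
  ent_eq_sum_ent_of_equiv (Equiv.prodComm _ _) (bqU2 j)

lemma ent_bqU1 : ent (bqU1 j) = ∑ q, ent (bU1 fun z ↦ j (q, z)) :=
  ent_eq_sum_ent_of_equiv (Equiv.prodComm _ _) (bqU1 j)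

lemma ent_bqY1U2 : ent (bqY1U2 j) = ∑ q, ent (bY1U2 fun z ↦ j (q, z)) := by
  rw [ent_eq_sum_ent_of_equiv ((Equiv.prodComm _ _).trans (Equiv.prodAssoc _ _ _))]
  exact sum_congr rfl fun _ _ ↦ congrArg ent (funext fun _ ↦ sum_comm)

lemma ent_bqY2U1 : ent (bqY2U1 j) = ∑ q, ent (bY2U1 fun z ↦ j (q, z)) := by
  rw [ent_eq_sum_ent_of_equiv ((Equiv.prodComm _ _).trans (Equiv.prodAssoc _ _ _))]
  exact sum_congr rfl fun _ _ ↦ congrArg ent (funext fun _ ↦ sum_comm)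

lemma ent_bqY1U12 : ent (bqY1U12 j) = ∑ q, ent (bY1U fun z ↦ j (q, z)) :=
  ent_eq_sum_ent_of_equiv ((Equiv.prodComm _ _).trans ((Equiv.prodAssoc _ _ _).trans
    ((Equiv.refl _).prodCongr (Equiv.prodAssoc _ _ _)))) (bqY1U12 j)

lemma ent_bqY2U12 : ent (bqY2U12 j) = ∑ q, ent (bY2U fun z ↦ j (q, z)) :=
  ent_eq_sum_ent_of_equiv ((Equiv.prodComm _ _).trans ((Equiv.prodAssoc _ _ _).trans
    ((Equiv.refl _).prodCongr (Equiv.prodAssoc _ _ _)))) (bqY2U12 j)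

lemma ent_bqY12 : ent (bqY12 j) = ∑ q, ent (bY12 fun z ↦ j (q, z)) :=
  ent_eq_sum_ent_of_equiv ((Equiv.prodComm _ _).trans (Equiv.prodAssoc _ _ _)) (bqY12 j)

lemma bIQ1_eq_sum : bIQ1 j = ∑ q, bI1c fun z ↦ j (q, z) := by
  rw [bIQ1, ent_bqY1U2, ent_bqU12, ent_bqU2, ent_bqY1U12]
  simp only [bI1c, sum_sub_distrib, sum_add_distrib]

lemma bIQ2_eq_sum : bIQ2 j = ∑ q, bI2c fun z ↦ j (q, z) := by
  rw [bIQ2, ent_bqY2U1, ent_bqU12, ent_bqU1, ent_bqY2U12]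
  simp only [bI2c, sum_sub_distrib, sum_add_distrib]

lemma bIQsum_eq_sum : bIQsum j = ∑ q, bIsum fun z ↦ j (q, z) := by
  have hQ : bqQ j = fun q ↦ ∑ z, j (q, z) := by
    funext q
    simp only [bqQ, bqY12, Fintype.sum_prod_type]
  rw [bIQsum, ent_bqY12, ent_bqU12, hQ, ent_eq_sum_ent j]
  simp only [bIsum, ent, sum_sub_distrib, sum_add_distrib]

lemma bHQ1_eq_sum : bHQ1 j = ∑ q, bH1 fun z ↦ j (q, z) := by
  rw [bHQ1, ent_bqY1U12, ent_bqU12]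
  simp only [bH1, sum_sub_distrib]

lemma bHQ2_eq_sum : bHQ2 j = ∑ q, bH2 fun z ↦ j (q, z) := by
  rw [bHQ2, ent_bqY2U12, ent_bqU12]
  simp only [bH2, sum_sub_distrib]

variable (pQ : Qt → ℝ) (pY : Y1 × Y2 → ℝ) (c1 : Qt → Y1 → U1 → ℝ) (c2 : Qt → Y2 → U2 → ℝ)

omit [Fintype Y1] [Fintype Y2] [Fintype U1] [Fintype U2] [Fintype Qt] in
lemma btJointQ_slice (q : Qt) :
    (fun z ↦ btJointQ pQ pY c1 c2 (q, z)) = fun z ↦ pQ q * btJoint pY (c1 q) (c2 q) z :=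
  funext fun _ ↦ by rw [btJointQ, btJoint, mul_assoc, mul_assoc, ← mul_assoc (pY _)]

lemma bIQ1_btJointQ :
    bIQ1 (btJointQ pQ pY c1 c2) = ∑ q, pQ q * bI1c (btJoint pY (c1 q) (c2 q)) := by
  simp only [bIQ1_eq_sum, btJointQ_slice, bI1c_const_mul]

lemma bIQ2_btJointQ :
    bIQ2 (btJointQ pQ pY c1 c2) = ∑ q, pQ q * bI2c (btJoint pY (c1 q) (c2 q)) := by
  simp only [bIQ2_eq_sum, btJointQ_slice, bI2c_const_mul]

lemma bIQsum_btJointQ :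
    bIQsum (btJointQ pQ pY c1 c2) = ∑ q, pQ q * bIsum (btJoint pY (c1 q) (c2 q)) := by
  simp only [bIQsum_eq_sum, btJointQ_slice, bIsum_const_mul]

lemma bHQ1_btJointQ :
    bHQ1 (btJointQ pQ pY c1 c2) = ∑ q, pQ q * bH1 (btJoint pY (c1 q) (c2 q)) := by
  simp only [bHQ1_eq_sum, btJointQ_slice, bH1_const_mul]

lemma bHQ2_btJointQ :
    bHQ2 (btJointQ pQ pY c1 c2) = ∑ q, pQ q * bH2 (btJoint pY (c1 q) (c2 q)) := by
  simp only [bHQ2_eq_sum, btJointQ_slice, bH2_const_mul]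

end TimeSharing

/-! ### The Berger–Tung region and its corner points -/

/-- The set of test-channel pairs `(p(u₁|y₁), p(u₂|y₂))`. -/
def testChannels (Y1 Y2 U1 U2 : Type) [Fintype Y1] [Fintype Y2] [Fintype U1] [Fintype U2] :
    Set ((Y1 → U1 → ℝ) × (Y2 → U2 → ℝ)) :=
  {w | IsChan w} ×ˢ {w | IsChan w}

/-- The corner point `(I(Y₁;U₁|U₂), I(Y₂;U₂), H(Y₁|U₁,U₂), H(Y₂|U₁,U₂))` of the rate-distortion
quadruples achieved by a test-channel pair, at which the second user is decoded first. -/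
def corner1 (pY : Y1 × Y2 → ℝ) (x : (Y1 → U1 → ℝ) × (Y2 → U2 → ℝ)) : ℝ × ℝ × ℝ × ℝ :=
  let j := btJoint pY x.1 x.2
  (bI1c j, bI2m j, bH1 j, bH2 j)

/-- The corner point `(I(Y₁;U₁), I(Y₂;U₂|U₁), H(Y₁|U₁,U₂), H(Y₂|U₁,U₂))` of the rate-distortion
quadruples achieved by a test-channel pair, at which the first user is decoded first. -/
def corner2 (pY : Y1 × Y2 → ℝ) (x : (Y1 → U1 → ℝ) × (Y2 → U2 → ℝ)) : ℝ × ℝ × ℝ × ℝ :=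
  let j := btJoint pY x.1 x.2
  (bI1m j, bI2c j, bH1 j, bH2 j)

section Corners

lemma isCompact_testChannels : IsCompact (testChannels Y1 Y2 U1 U2) := by
  have hchan (α β : Type) [Fintype α] [Fintype β] : IsCompact {w : α → β → ℝ | IsChan w} := by
    convert isCompact_univ_pi fun _ : α ↦ isCompact_stdSimplex (𝕜 := ℝ) β using 1
    ext w
    exact ⟨fun h a _ ↦ h a, fun h a ↦ h a trivial⟩
  exact (hchan Y1 U1).prod (hchan Y2 U2)

lemma continuous_corner1 (pY : Y1 × Y2 → ℝ) :
    Continuous (corner1 pY : (Y1 → U1 → ℝ) × (Y2 → U2 → ℝ) → ℝ × ℝ × ℝ × ℝ) := by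
  unfold corner1 bI1c bI2m bH1 bH2 ent bY1U2 bY2 bY2U2 bU2 bU12 bY1U bY2U btJoint
  fun_prop

lemma continuous_corner2 (pY : Y1 × Y2 → ℝ) :
    Continuous (corner2 pY : (Y1 → U1 → ℝ) × (Y2 → U2 → ℝ) → ℝ × ℝ × ℝ × ℝ) := by
  unfold corner2 bI1m bI2c bH1 bH2 ent bY2U1 bY1U1 bY1 bU1 bU12 bY1U2 bY1U bY2U btJoint
  fun_prop

variable {pY : Y1 × Y2 → ℝ} {x : (Y1 → U1 → ℝ) × (Y2 → U2 → ℝ)}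

lemma corner1_fst_le_corner2_fst (hpY : IsPmf pY) (hx : x ∈ testChannels Y1 Y2 U1 U2) :
    (corner1 pY x).1 ≤ (corner2 pY x).1 :=
  bI1c_le_bI1m_btJoint hpY hx.1 hx.2

lemma corner1_sum_rate (hpY : IsPmf pY) (hx : x ∈ testChannels Y1 Y2 U1 U2) :
    (corner1 pY x).1 + (corner1 pY x).2.1 = bIsum (btJoint pY x.1 x.2) :=
  bI1c_add_bI2m_btJoint hpY hx.1 hx.2

lemma corner2_sum_rate (hpY : IsPmf pY) (hx : x ∈ testChannels Y1 Y2 U1 U2) :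
    (corner2 pY x).1 + (corner2 pY x).2.1 = bIsum (btJoint pY x.1 x.2) :=
  bI1m_add_bI2c_btJoint hpY hx.1 hx.2

lemma corner1_rates_nonneg (hpY : IsPmf pY) (hx : x ∈ testChannels Y1 Y2 U1 U2) :
    0 ≤ (corner1 pY x).1 ∧ 0 ≤ (corner1 pY x).2.1 := by
  have hj := (isPmf_btJoint hpY hx.1 hx.2).1
  have h2c : 0 ≤ (corner2 pY x).2.1 := bI2c_nonneg hj
  refine ⟨bI1c_nonneg hj, ?_⟩
  linarith [corner1_fst_le_corner2_fst hpY hx, corner1_sum_rate hpY hx, corner2_sum_rate hpY hx]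

lemma corner2_rates_nonneg (hpY : IsPmf pY) (hx : x ∈ testChannels Y1 Y2 U1 U2) :
    0 ≤ (corner2 pY x).1 ∧ 0 ≤ (corner2 pY x).2.1 := by
  have hj := (isPmf_btJoint hpY hx.1 hx.2).1
  exact ⟨(corner1_rates_nonneg hpY hx).1.trans (corner1_fst_le_corner2_fst hpY hx),
    bI2c_nonneg hj⟩

/-- Constant test channels have zero rates: their mutual informations vanish, and the conditional
ones are squeezed in between. -/
lemma exists_mem_testChannels_corners_le_zero [Nonempty U1] [Nonempty U2] (hpY : IsPmf pY) :
    ∃ x ∈ testChannels Y1 Y2 U1 U2, ((corner1 pY x).1 ≤ 0 ∧ (corner1 pY x).2.1 ≤ 0) ∧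
      (corner2 pY x).1 ≤ 0 ∧ (corner2 pY x).2.1 ≤ 0 := by
  classical
  let v1 : U1 → ℝ := Pi.single (Classical.arbitrary U1) 1
  let v2 : U2 → ℝ := Pi.single (Classical.arbitrary U2) 1
  let x : (Y1 → U1 → ℝ) × (Y2 → U2 → ℝ) := (fun _ ↦ v1, fun _ ↦ v2)
  have hv1 : IsPmf v1 := isPmf_single _
  have hv2 : IsPmf v2 := isPmf_single _
  have hx : x ∈ testChannels Y1 Y2 U1 U2 := ⟨fun _ ↦ hv1, fun _ ↦ hv2⟩
  have h1m : (corner2 pY x).1 = 0 := bI1m_btJoint_const hpY hv1 fun _ ↦ hv2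
  have h2m : (corner1 pY x).2.1 = 0 := bI2m_btJoint_const hpY (fun _ ↦ hv1) hv2
  have hle := corner1_fst_le_corner2_fst hpY hx
  have hsum := (corner1_sum_rate hpY hx).trans (corner2_sum_rate hpY hx).symm
  exact ⟨x, hx, ⟨by linarith, h2m.le⟩, h1m.le, by linarith⟩

end Corners

section Regions

variable (V1 V2 : Type) [Fintype V1] [Fintype V2]

/-- The region `RD_BT` for the auxiliary alphabets `V1`, `V2` and time-sharing alphabets of at most
`N` letters. -/
def btRegion (N : ℕ) (pY : Y1 × Y2 → ℝ) : Set (ℝ × ℝ × ℝ × ℝ) :=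
  {r | ∃ m : ℕ, m ≤ N ∧
    ∃ pQ : Fin m → ℝ, ∃ c1 : Fin m → Y1 → V1 → ℝ, ∃ c2 : Fin m → Y2 → V2 → ℝ,
      IsPmf pQ ∧ (∀ q, IsChan (c1 q)) ∧ (∀ q, IsChan (c2 q)) ∧
      bIQ1 (btJointQ pQ pY c1 c2) ≤ r.1 ∧
      bIQ2 (btJointQ pQ pY c1 c2) ≤ r.2.1 ∧
      bIQsum (btJointQ pQ pY c1 c2) ≤ r.1 + r.2.1 ∧
      bHQ1 (btJointQ pQ pY c1 c2) ≤ r.2.2.1 ∧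
      bHQ2 (btJointQ pQ pY c1 c2) ≤ r.2.2.2}

/-- The region `RD¹_BT` for the auxiliary alphabets `V1`, `V2`. -/
def btRegion1 (pY : Y1 × Y2 → ℝ) : Set (ℝ × ℝ × ℝ × ℝ) :=
  {r | 0 ≤ r.1 ∧ 0 ≤ r.2.1 ∧ ∀ a : ℝ, 0 ≤ a → a ≤ 1 →
    Dbt1 V1 V2 pY a r.1 r.2.1 ≤ a * r.2.2.1 + (1 - a) * r.2.2.2}

/-- The region `RD²_BT` for the auxiliary alphabets `V1`, `V2`. -/
def btRegion2 (pY : Y1 × Y2 → ℝ) : Set (ℝ × ℝ × ℝ × ℝ) :=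
  {r | 0 ≤ r.1 ∧ 0 ≤ r.2.1 ∧ ∀ a : ℝ, 0 ≤ a → a ≤ 1 →
    Dbt2 V1 V2 pY a r.1 r.2.1 ≤ a * r.2.2.1 + (1 - a) * r.2.2.2}

variable {V1 V2}

lemma btRegion1_eq_scalarizedRegion (pY : Y1 × Y2 → ℝ) :
    btRegion1 V1 V2 pY = scalarizedRegion (corner1 pY '' testChannels Y1 Y2 V1 V2) := by
  have hD (a R1 R2 : ℝ) : Dbt1 V1 V2 pY a R1 R2 =
      sInf ((fun z ↦ a * z.2.2.1 + (1 - a) * z.2.2.2) ''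
        {z ∈ corner1 pY '' testChannels Y1 Y2 V1 V2 | z.1 ≤ R1 ∧ z.2.1 ≤ R2}) := by
    refine congrArg sInf (Set.Subset.antisymm ?_ ?_)
    · rintro _ ⟨p1, p2, hp1, hp2, hR1, hR2, rfl⟩
      exact ⟨_, ⟨⟨(p1, p2), ⟨hp1, hp2⟩, rfl⟩, hR1, hR2⟩, rfl⟩
    · rintro _ ⟨_, ⟨⟨x, hx, rfl⟩, hR1, hR2⟩, rfl⟩
      exact ⟨x.1, x.2, hx.1, hx.2, hR1, hR2, rfl⟩
  ext r
  simp only [btRegion1, scalarizedRegion, hD, Set.mem_ofPred_eq, Set.mem_Icc, and_imp]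

lemma btRegion2_eq_scalarizedRegion (pY : Y1 × Y2 → ℝ) :
    btRegion2 V1 V2 pY = scalarizedRegion (corner2 pY '' testChannels Y1 Y2 V1 V2) := by
  have hD (a R1 R2 : ℝ) : Dbt2 V1 V2 pY a R1 R2 =
      sInf ((fun z ↦ a * z.2.2.1 + (1 - a) * z.2.2.2) ''
        {z ∈ corner2 pY '' testChannels Y1 Y2 V1 V2 | z.1 ≤ R1 ∧ z.2.1 ≤ R2}) := by
    refine congrArg sInf (Set.Subset.antisymm ?_ ?_)
    · rintro _ ⟨p1, p2, hp1, hp2, hR2, hR1, rfl⟩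
      exact ⟨_, ⟨⟨(p1, p2), ⟨hp1, hp2⟩, rfl⟩, hR1, hR2⟩, rfl⟩
    · rintro _ ⟨_, ⟨⟨x, hx, rfl⟩, hR1, hR2⟩, rfl⟩
      exact ⟨x.1, x.2, hx.1, hx.2, hR2, hR1, rfl⟩
  ext r
  simp only [btRegion2, scalarizedRegion, hD, Set.mem_ofPred_eq, Set.mem_Icc, and_imp]

variable {pY : Y1 × Y2 → ℝ}

lemma mem_pentagon_sum_corners_iff (hpY : IsPmf pY) {pQ : Qt → ℝ}
    {x : Qt → (Y1 → V1 → ℝ) × (Y2 → V2 → ℝ)} (hx : ∀ q, x q ∈ testChannels Y1 Y2 V1 V2)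
    {r : ℝ × ℝ × ℝ × ℝ} :
    let j := btJointQ pQ pY (fun q ↦ (x q).1) (fun q ↦ (x q).2)
    r ∈ pentagon (∑ q, pQ q • corner1 pY (x q)) (∑ q, pQ q • corner2 pY (x q)) ↔
      bIQ1 j ≤ r.1 ∧ bIQ2 j ≤ r.2.1 ∧ bIQsum j ≤ r.1 + r.2.1 ∧ bHQ1 j ≤ r.2.2.1 ∧
        bHQ2 j ≤ r.2.2.2 := by
  have hsum (q : Qt) : bI1c (btJoint pY (x q).1 (x q).2) + bI2m (btJoint pY (x q).1 (x q).2) =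
      bIsum (btJoint pY (x q).1 (x q).2) := corner1_sum_rate hpY (hx q)
  simp only [pentagon, Set.mem_ofPred_eq, Prod.fst_sum, Prod.snd_sum, Prod.smul_fst,
    Prod.smul_snd, smul_eq_mul, ← sum_add_distrib, ← mul_add, hsum, Prod.le_def, bIQ1_btJointQ,
    bIQ2_btJointQ, bIQsum_btJointQ, bHQ1_btJointQ, bHQ2_btJointQ, corner1, corner2]

lemma mem_btRegion_iff (hpY : IsPmf pY) {N : ℕ} {r : ℝ × ℝ × ℝ × ℝ} :
    r ∈ btRegion V1 V2 N pY ↔ ∃ m ≤ N, ∃ w ∈ stdSimplex ℝ (Fin m),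
      ∃ x : Fin m → (Y1 → V1 → ℝ) × (Y2 → V2 → ℝ), (∀ q, x q ∈ testChannels Y1 Y2 V1 V2) ∧
        r ∈ pentagon (∑ q, w q • corner1 pY (x q)) (∑ q, w q • corner2 pY (x q)) := by
  constructor
  · rintro ⟨m, hm, w, c1, c2, hw, hc1, hc2, hr⟩
    have hx (q : Fin m) : (c1 q, c2 q) ∈ testChannels Y1 Y2 V1 V2 := ⟨hc1 q, hc2 q⟩
    exact ⟨m, hm, w, hw, _, hx, (mem_pentagon_sum_corners_iff hpY hx).2 hr⟩
  · rintro ⟨m, hm, w, hw, x, hx, hr⟩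
    exact ⟨m, hm, w, _, _, hw, fun q ↦ (hx q).1, fun q ↦ (hx q).2,
      (mem_pentagon_sum_corners_iff hpY hx).1 hr⟩

theorem bt_region_decomposition_general [Nonempty V1] [Nonempty V2] {N : ℕ} (hN : 5 ≤ N)
    (hpY : IsPmf pY) :
    btRegion V1 V2 N pY = convexHull ℝ (btRegion1 V1 V2 pY ∪ btRegion2 V1 V2 pY) := by
  obtain ⟨x, hx, hzero1, hzero2⟩ :=
    exists_mem_testChannels_corners_le_zero (U1 := V1) (U2 := V2) hpY
  rw [btRegion1_eq_scalarizedRegion, btRegion2_eq_scalarizedRegion,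
    convexHull_scalarizedRegion_union
      (isCompact_testChannels.image (continuous_corner1 pY))
      (isCompact_testChannels.image (continuous_corner2 pY))
      (Set.forall_mem_image.2 fun _ ↦ corner1_rates_nonneg hpY)
      (Set.forall_mem_image.2 fun _ ↦ corner2_rates_nonneg hpY)
      ⟨_, ⟨x, hx, rfl⟩, hzero1⟩ ⟨_, ⟨x, hx, rfl⟩, hzero2⟩]
  ext r
  rw [mem_btRegion_iff hpY, mem_convexHull_upperClosure_iff_exists_pentagon
    (fun _ ↦ corner1_fst_le_corner2_fst hpY)
    (fun _ hx ↦ (corner1_sum_rate hpY hx).trans (corner2_sum_rate hpY hx).symm)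
    (fun _ _ ↦ rfl) hN]

end Regions

/-- **Proposition 4** (Berger–Tung region decomposition):
`RD_BT = conv(RD¹_BT ∪ RD²_BT)` as subsets of `ℝ⁴`. Here the auxiliary alphabets are
`𝒰₁ = 𝒴₁` and `𝒰₂ = 𝒴₂` (so that `|𝒰ᵢ| = |𝒴ᵢ|`), and the time-sharing alphabet is
`Fin m` with `m ≤ 5`. -/
theorem bt_region_decomposition
    (pY : Y1 × Y2 → ℝ) (hpY : IsPmf pY) :
    {r : ℝ × ℝ × ℝ × ℝ | ∃ m : ℕ, m ≤ 5 ∧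
      ∃ pQ : Fin m → ℝ, ∃ c1 : Fin m → Y1 → Y1 → ℝ, ∃ c2 : Fin m → Y2 → Y2 → ℝ,
        IsPmf pQ ∧ (∀ q, IsChan (c1 q)) ∧ (∀ q, IsChan (c2 q)) ∧
        bIQ1 (btJointQ pQ pY c1 c2) ≤ r.1 ∧
        bIQ2 (btJointQ pQ pY c1 c2) ≤ r.2.1 ∧
        bIQsum (btJointQ pQ pY c1 c2) ≤ r.1 + r.2.1 ∧
        bHQ1 (btJointQ pQ pY c1 c2) ≤ r.2.2.1 ∧
        bHQ2 (btJointQ pQ pY c1 c2) ≤ r.2.2.2}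
    = convexHull ℝ
      ({r : ℝ × ℝ × ℝ × ℝ | 0 ≤ r.1 ∧ 0 ≤ r.2.1 ∧
          ∀ a : ℝ, 0 ≤ a → a ≤ 1 →
            Dbt1 Y1 Y2 pY a r.1 r.2.1 ≤ a * r.2.2.1 + (1 - a) * r.2.2.2}
        ∪ {r : ℝ × ℝ × ℝ × ℝ | 0 ≤ r.1 ∧ 0 ≤ r.2.1 ∧
          ∀ a : ℝ, 0 ≤ a → a ≤ 1 →
            Dbt2 Y1 Y2 pY a r.1 r.2.1 ≤ a * r.2.2.1 + (1 - a) * r.2.2.2}) := by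
  obtain ⟨⟨y1, y2⟩⟩ := hpY.nonempty
  have : Nonempty Y1 := ⟨y1⟩
  have : Nonempty Y2 := ⟨y2⟩
  exact bt_region_decomposition_general le_rfl hpY
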